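/- arXiv:1709.03896 — 8 statements merged into one kernel-verified Lean document; each statement's English description precedes it below -/
import Mathlib

section
/- Let E = EuclideanSpace ℝ (Fin N), let f : E → ℝ, let Δt > 0, let M, C : E →ₗ[ℝ] E be self-adjoint linear maps, and let G : E × E → E satisfy the directionality identity ⟪G(x,y), y − x⟫ = f(y) − f(x) for all x, y ∈ E. Suppose u : ℕ → E satisfies, for all n ≥ 1, the two-step scheme M((u(n+1) − 2u(n) + u(n−1))/Δt²) + C((u(n+1) − u(n−1))/(2Δt)) + G((u(n)+u(n−1))/2, (u(n+1)+u(n))/2) = 0. Define v(n) := (u(n) − u(n−1))/Δt, m(n) := (u(n) + u(n−1))/2, and the discrete total energy Π(n) := (1/2)⟪v(n), M v(n)⟫ + f(m(n)). Then for all n ≥ 1, Π(n+1) − Π(n) = −Δt ⟪w(n), C w(n)⟫, where w(n) := (u(n+1) − u(n−1))/(2Δt). -/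
/-!
The scheme is paired with the increment `m(n+1) - m(n) = Δt • w(n)` of the midpoints. The
discrete-gradient identity turns the `G` term into `f (m(n+1)) - f (m(n))`. Since
`w(n) = (v(n+1) + v(n)) / 2` and the discrete acceleration is `(v(n+1) - v(n)) / Δt`, symmetry
of `M` turns the inertial term into the difference of the kinetic energies, and the damping term
is the dissipation `Δt * ⟪w(n), C w(n)⟫`.
-/

open RealInnerProductSpace

/-- Discrete energy balance for the two-step scheme driven by a discrete gradient `G`:
`Π(n+1) − Π(n) = −Δt ⟪w(n), C w(n)⟫`, where `v(n) = (u(n) − u(n−1))/Δt`,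
`m(n) = (u(n) + u(n−1))/2`, `Π(n) = (1/2)⟪v(n), M v(n)⟫ + f(m(n))`, and
`w(n) = (u(n+1) − u(n−1))/(2Δt)`. -/
theorem discrete_energy_balance (N : ℕ)
    (f : EuclideanSpace ℝ (Fin N) → ℝ) (Δt : ℝ) (hΔt : 0 < Δt)
    (M C : EuclideanSpace ℝ (Fin N) →ₗ[ℝ] EuclideanSpace ℝ (Fin N))
    (hM_sa : ∀ x y : EuclideanSpace ℝ (Fin N), ⟪M x, y⟫ = ⟪x, M y⟫)
    (hC_sa : ∀ x y : EuclideanSpace ℝ (Fin N), ⟪C x, y⟫ = ⟪x, C y⟫)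
    (G : EuclideanSpace ℝ (Fin N) → EuclideanSpace ℝ (Fin N) → EuclideanSpace ℝ (Fin N))
    (hG : ∀ x y : EuclideanSpace ℝ (Fin N), ⟪G x y, y - x⟫ = f y - f x)
    (u : ℕ → EuclideanSpace ℝ (Fin N))
    (hu : ∀ n, 1 ≤ n →
      M ((Δt ^ 2)⁻¹ • (u (n + 1) - (2 : ℝ) • u n + u (n - 1))) +
        C ((2 * Δt)⁻¹ • (u (n + 1) - u (n - 1))) +
        G ((2 : ℝ)⁻¹ • (u n + u (n - 1))) ((2 : ℝ)⁻¹ • (u (n + 1) + u n)) = 0) :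
    ∀ n, 1 ≤ n →
      ((1/2 : ℝ) * ⟪Δt⁻¹ • (u (n + 1) - u n), M (Δt⁻¹ • (u (n + 1) - u n))⟫ +
          f ((2 : ℝ)⁻¹ • (u (n + 1) + u n))) -
        ((1/2 : ℝ) * ⟪Δt⁻¹ • (u n - u (n - 1)), M (Δt⁻¹ • (u n - u (n - 1)))⟫ +
          f ((2 : ℝ)⁻¹ • (u n + u (n - 1)))) =
      -Δt * ⟪(2 * Δt)⁻¹ • (u (n + 1) - u (n - 1)),
              C ((2 * Δt)⁻¹ • (u (n + 1) - u (n - 1)))⟫ := by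
  intro n hn
  have hne : Δt ≠ 0 := hΔt.ne'
  have hs := hu n hn
  have hg := hG ((2 : ℝ)⁻¹ • (u n + u (n - 1))) ((2 : ℝ)⁻¹ • (u (n + 1) + u n))
  set v' := Δt⁻¹ • (u (n + 1) - u n) with hv'
  set v := Δt⁻¹ • (u n - u (n - 1)) with hv
  have hw : (2 * Δt)⁻¹ • (u (n + 1) - u (n - 1)) = (2 : ℝ)⁻¹ • (v' + v) := by
    rw [hv', hv, mul_inv]; module
  have ha : (Δt ^ 2)⁻¹ • (u (n + 1) - (2 : ℝ) • u n + u (n - 1)) = Δt⁻¹ • (v' - v) := by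
    rw [hv', hv, ← inv_pow]; module
  have hm : (2 : ℝ)⁻¹ • (u (n + 1) + u n) - (2 : ℝ)⁻¹ • (u n + u (n - 1))
      = Δt • (2 : ℝ)⁻¹ • (v' + v) := by
    rw [hv', hv, ← smul_add, smul_comm Δt, smul_inv_smul₀ hne]; module
  rw [hw, ha] at hs
  rw [hw]
  rw [hm] at hg
  -- The scheme is tested against the midpoint increment `Δt • w(n)`.
  have ht := congrArg (fun z => ⟪z, Δt • (2 : ℝ)⁻¹ • (v' + v)⟫) hs
  simp only [inner_add_left, inner_zero_left, hg] at ht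
  -- Symmetry of `M` cancels the cross terms, leaving the kinetic energy increment.
  have hk : ⟪M (Δt⁻¹ • (v' - v)), Δt • (2 : ℝ)⁻¹ • (v' + v)⟫
      = 1 / 2 * ⟪v', M v'⟫ - 1 / 2 * ⟪v, M v⟫ := by
    simp only [map_smul, map_sub, inner_smul_left, inner_smul_right, inner_add_right,
      inner_sub_left, hM_sa, conj_trivial]
    have hx : ⟪v, M v'⟫ = ⟪v', M v⟫ := by rw [← hM_sa, real_inner_comm]
    rw [hx]
    field_simp
    ring
  have hd : ⟪C ((2 : ℝ)⁻¹ • (v' + v)), Δt • (2 : ℝ)⁻¹ • (v' + v)⟫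
      = Δt * ⟪(2 : ℝ)⁻¹ • (v' + v), C ((2 : ℝ)⁻¹ • (v' + v))⟫ := by
    rw [real_inner_smul_right, hC_sa]
  rw [hk, hd] at ht
  linarith
end

section
/- Let E = EuclideanSpace ℝ (Fin N), let f : E → ℝ, let Δt > 0, let M, C : E →ₗ[ℝ] E be self-adjoint with C positive semidefinite, and let G : E × E → E satisfy ⟪G(x,y), y − x⟫ = f(y) − f(x) for all x, y ∈ E. Suppose u : ℕ → E satisfies, for all n ≥ 1, M((u(n+1) − 2u(n) + u(n−1))/Δt²) + C((u(n+1) − u(n−1))/(2Δt)) + G((u(n)+u(n−1))/2, (u(n+1)+u(n))/2) = 0. Define v(n) := (u(n) − u(n−1))/Δt, m(n) := (u(n) + u(n−1))/2, and Π(n) := (1/2)⟪v(n), M v(n)⟫ + f(m(n)). Then the discrete total energy is non-increasing: Π(n+1) ≤ Π(n) for all n ≥ 1. -/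
open RealInnerProductSpace

/-!
The inner product of the scheme with the midpoint increment `m(n+1) - m(n) = (a + b) / 2`, where
`a = u(n+1) - u(n)` and `b = u(n) - u(n-1)`, is an energy balance: the inertia term gives exactly
the change of kinetic energy, since `⟪M (a - b), a + b⟫ = ⟪a, M a⟫ - ⟪b, M b⟫` for self-adjoint `M`;
the discrete gradient gives exactly the change of `f`; and the damping term is a nonnegative
multiple of `⟪a + b, C (a + b)⟫`. The energy change is therefore minus a nonnegative number.
-/

/-- Unconditional stability of the two-step scheme driven by a discrete gradient `G`
with positive semidefinite damping: the discrete total energy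
`Π(n) = (1/2)⟪v(n), M v(n)⟫ + f(m(n))` is non-increasing, where
`v(n) = (u(n) − u(n−1))/Δt` and `m(n) = (u(n) + u(n−1))/2`. -/
theorem discrete_energy_nonincreasing (N : ℕ)
    (f : EuclideanSpace ℝ (Fin N) → ℝ) (Δt : ℝ) (hΔt : 0 < Δt)
    (M C : EuclideanSpace ℝ (Fin N) →ₗ[ℝ] EuclideanSpace ℝ (Fin N))
    (hM_sa : ∀ x y : EuclideanSpace ℝ (Fin N), ⟪M x, y⟫ = ⟪x, M y⟫)
    (hC_sa : ∀ x y : EuclideanSpace ℝ (Fin N), ⟪C x, y⟫ = ⟪x, C y⟫)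
    (hC_psd : ∀ v : EuclideanSpace ℝ (Fin N), 0 ≤ ⟪v, C v⟫)
    (G : EuclideanSpace ℝ (Fin N) → EuclideanSpace ℝ (Fin N) → EuclideanSpace ℝ (Fin N))
    (hG : ∀ x y : EuclideanSpace ℝ (Fin N), ⟪G x y, y - x⟫ = f y - f x)
    (u : ℕ → EuclideanSpace ℝ (Fin N))
    (hu : ∀ n, 1 ≤ n →
      M ((Δt ^ 2)⁻¹ • (u (n + 1) - (2 : ℝ) • u n + u (n - 1))) +
        C ((2 * Δt)⁻¹ • (u (n + 1) - u (n - 1))) +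
        G ((2 : ℝ)⁻¹ • (u n + u (n - 1))) ((2 : ℝ)⁻¹ • (u (n + 1) + u n)) = 0) :
    ∀ n, 1 ≤ n →
      (1/2 : ℝ) * ⟪Δt⁻¹ • (u (n + 1) - u n), M (Δt⁻¹ • (u (n + 1) - u n))⟫ +
          f ((2 : ℝ)⁻¹ • (u (n + 1) + u n)) ≤
        (1/2 : ℝ) * ⟪Δt⁻¹ • (u n - u (n - 1)), M (Δt⁻¹ • (u n - u (n - 1)))⟫ +
          f ((2 : ℝ)⁻¹ • (u n + u (n - 1))) := by
  intro n hn
  have h := hu n hn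
  have hg := hG ((2 : ℝ)⁻¹ • (u n + u (n - 1))) ((2 : ℝ)⁻¹ • (u (n + 1) + u n))
  obtain ⟨a, ha⟩ : ∃ a, a = u (n + 1) - u n := ⟨_, rfl⟩
  obtain ⟨b, hb⟩ : ∃ b, b = u n - u (n - 1) := ⟨_, rfl⟩
  have hdiff : u (n + 1) - (2 : ℝ) • u n + u (n - 1) = a - b := by
    rw [ha, hb]; module
  have hsum : u (n + 1) - u (n - 1) = a + b := by
    rw [ha, hb]; module
  have hmid : (2 : ℝ)⁻¹ • (u (n + 1) + u n) - (2 : ℝ)⁻¹ • (u n + u (n - 1))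
      = (2 : ℝ)⁻¹ • (a + b) := by
    rw [ha, hb]; module
  rw [hdiff, hsum] at h
  rw [hmid] at hg
  rw [← ha, ← hb]
  -- Test the scheme against the midpoint increment `(a + b) / 2`.
  have key := congrArg (fun z => ⟪z, (2 : ℝ)⁻¹ • (a + b)⟫) h
  simp only [inner_add_left (𝕜 := ℝ), hg, inner_zero_left] at key
  have hkin : ⟪M ((Δt ^ 2)⁻¹ • (a - b)), (2 : ℝ)⁻¹ • (a + b)⟫
      = (1/2 : ℝ) * ⟪Δt⁻¹ • a, M (Δt⁻¹ • a)⟫ - (1/2 : ℝ) * ⟪Δt⁻¹ • b, M (Δt⁻¹ • b)⟫ := by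
    -- Self-adjointness of `M` cancels the cross terms.
    have hab : ⟪b, M a⟫ = ⟪a, M b⟫ := by rw [← hM_sa, real_inner_comm]
    simp only [hM_sa, map_smul, map_sub, real_inner_smul_left, real_inner_smul_right,
      inner_add_right, inner_sub_left, hab]
    ring
  have hdamp : 0 ≤ ⟪C ((2 * Δt)⁻¹ • (a + b)), (2 : ℝ)⁻¹ • (a + b)⟫ := by
    rw [hC_sa, map_smul, real_inner_smul_left, real_inner_smul_right]
    have := hC_psd (a + b)
    positivity
  linarith
end

section
/- Let E = EuclideanSpace ℝ (Fin N), let f : E → ℝ, let Δt > 0, let M : E →ₗ[ℝ] E be self-adjoint, and let G : E × E → E satisfy ⟪G(x,y), y − x⟫ = f(y) − f(x) for all x, y ∈ E. Suppose u : ℕ → E satisfies the undamped two-step scheme, for all n ≥ 1: M((u(n+1) − 2u(n) + u(n−1))/Δt²) + G((u(n)+u(n−1))/2, (u(n+1)+u(n))/2) = 0. Define v(n) := (u(n) − u(n−1))/Δt, m(n) := (u(n) + u(n−1))/2, and Π(n) := (1/2)⟪v(n), M v(n)⟫ + f(m(n)). Then the discrete total energy is exactly conserved: Π(n) = Π(1)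 for all n ≥ 1. -/
open RealInnerProductSpace

/-!
Pairing the scheme at step `n` with the difference of consecutive midpoints
`(u (n + 1) - u (n - 1)) / 2` gives `Π (n + 1) - Π n = 0`. With `a = u (n + 1) - u n` and
`b = u n - u (n - 1)`, the inertial term becomes `⟪M (a - b), a + b⟫ / (2 Δt²)`, which by
self-adjointness of `M` is the difference of the kinetic energies, while the discrete gradient
identity turns the `G` term into the difference of the potential energies.
-/

/-- Exact conservation of the discrete total energy by the undamped two-step scheme
driven by a discrete gradient `G`: `Π(n) = Π(1)` for all `n ≥ 1`, where
`Π(n) = (1/2)⟪v(n), M v(n)⟫ + f(m(n))` with `v(n) = (u(n) − u(n−1))/Δt` and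
`m(n) = (u(n) + u(n−1))/2`. -/
theorem discrete_energy_conserved (N : ℕ)
    (f : EuclideanSpace ℝ (Fin N) → ℝ) (Δt : ℝ) (hΔt : 0 < Δt)
    (M : EuclideanSpace ℝ (Fin N) →ₗ[ℝ] EuclideanSpace ℝ (Fin N))
    (hM_sa : ∀ x y : EuclideanSpace ℝ (Fin N), ⟪M x, y⟫ = ⟪x, M y⟫)
    (G : EuclideanSpace ℝ (Fin N) → EuclideanSpace ℝ (Fin N) → EuclideanSpace ℝ (Fin N))
    (hG : ∀ x y : EuclideanSpace ℝ (Fin N), ⟪G x y, y - x⟫ = f y - f x)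
    (u : ℕ → EuclideanSpace ℝ (Fin N))
    (hu : ∀ n, 1 ≤ n →
      M ((Δt ^ 2)⁻¹ • (u (n + 1) - (2 : ℝ) • u n + u (n - 1))) +
        G ((2 : ℝ)⁻¹ • (u n + u (n - 1))) ((2 : ℝ)⁻¹ • (u (n + 1) + u n)) = 0) :
    ∀ n, 1 ≤ n →
      (1/2 : ℝ) * ⟪Δt⁻¹ • (u n - u (n - 1)), M (Δt⁻¹ • (u n - u (n - 1)))⟫ +
          f ((2 : ℝ)⁻¹ • (u n + u (n - 1))) =
        (1/2 : ℝ) * ⟪Δt⁻¹ • (u 1 - u 0), M (Δt⁻¹ • (u 1 - u 0))⟫ +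
          f ((2 : ℝ)⁻¹ • (u 1 + u 0)) := by
  intro n hn
  induction n, hn using Nat.le_induction with
  | base => rfl
  | succ n hn ih =>
    rw [← ih, Nat.add_sub_cancel]
    have hs := hu n hn
    have hg := hG ((2 : ℝ)⁻¹ • (u n + u (n - 1))) ((2 : ℝ)⁻¹ • (u (n + 1) + u n))
    rw [eq_neg_of_add_eq_zero_right hs] at hg
    -- In terms of the increments `a`, `b`, the second difference is `a - b`, and the two
    -- midpoints differ by `(a + b) / 2`.
    obtain ⟨a, ha⟩ : ∃ a, a = u (n + 1) - u n := ⟨_, rfl⟩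
    obtain ⟨b, hb⟩ : ∃ b, b = u n - u (n - 1) := ⟨_, rfl⟩
    have h1 : u (n + 1) - (2 : ℝ) • u n + u (n - 1) = a - b := by
      rw [ha, hb]; module
    have h2 : (2 : ℝ)⁻¹ • (u (n + 1) + u n) - (2 : ℝ)⁻¹ • (u n + u (n - 1))
        = (2 : ℝ)⁻¹ • (a + b) := by
      rw [ha, hb]; module
    rw [h1, h2] at hg
    rw [← ha, ← hb]
    have hab : ⟪M a, b⟫ = ⟪M b, a⟫ := by rw [hM_sa, real_inner_comm]
    simp only [map_smul, map_sub, inner_neg_left, inner_smul_left, inner_smul_right,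
      inner_sub_left, inner_add_right, ← hM_sa, hab, conj_trivial, inv_pow] at hg ⊢
    linear_combination -hg
end

section
/- Let E = EuclideanSpace ℝ (Fin N), let f : E → ℝ be differentiable, let W : E →ₗ[ℝ] E be self-adjoint positive definite, let Δt > 0, and let M, C : E →ₗ[ℝ] E be self-adjoint. Define the Gonzalez flux G_GS : E × E → E by G_GS(x,y) := ∇f((x+y)/2) + ((f(y) − f(x) − ⟪∇f((x+y)/2), y−x⟫)/⟪y−x, W(y−x)⟫) • W(y−x) for y ≠ x, and G_GS(x,x) := ∇f(x). Suppose u : ℕ → E satisfies, for all n ≥ 1, M((u(n+1) − 2u(n) + u(n−1))/Δt²) + C((u(n+1) − u(n−1))/(2Δt)) + G_GS((u(n)+u(n−1))/2, (u(n+1)+u(n))/2) = 0. Then with v(n) := (u(n) − u(n−1))/Δt, m(n) := (u(n) + u(n−1))/2, Π(n) := (1/2)⟪v(n), M v(n)⟫ + f(m(n)), and w(n) := (u(n+1) − u(n−1))/(2Δt), one has Π(n+1) − Π(n) = −Δt ⟪w(n), C w(n)⟫ for all n ≥ 1. -/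
/-!
The Gonzalez flux is a discrete gradient: `⟪G(x, y), y - x⟫ = f y - f x`
(`inner_gonzalezFlux_sub`). Pairing the scheme with the difference of consecutive midpoints,
`m(n+1) - m(n) = (u(n+1) - u(n-1)) / 2 = Δt w(n)`, the flux term therefore gives exactly the
increment of `f`, the damping term gives `Δt ⟪w(n), C w(n)⟫`, and since
`Δt w(n) = Δt (v(n+1) + v(n)) / 2`, the inertial term telescopes by the symmetry of `M` to the
increment of `(1/2) ⟪v, M v⟫`.
-/

open RealInnerProductSpace

open Classical in
/-- The Gonzalez discrete-gradient flux associated with a potential `f` and a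
self-adjoint positive-definite weighting operator `W`. -/
noncomputable def gonzalezFlux {N : ℕ}
    (f : EuclideanSpace ℝ (Fin N) → ℝ)
    (W : EuclideanSpace ℝ (Fin N) →ₗ[ℝ] EuclideanSpace ℝ (Fin N))
    (x y : EuclideanSpace ℝ (Fin N)) : EuclideanSpace ℝ (Fin N) :=
  if y = x then gradient f x
  else
    gradient f ((2 : ℝ)⁻¹ • (x + y)) +
      ((f y - f x - ⟪gradient f ((2 : ℝ)⁻¹ • (x + y)), y - x⟫) / ⟪y - x, W (y - x)⟫) •
        W (y - x)

/-- The discrete-gradient (secant) property of the Gonzalez flux. -/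
lemma inner_gonzalezFlux_sub {N : ℕ}
    (f : EuclideanSpace ℝ (Fin N) → ℝ)
    (W : EuclideanSpace ℝ (Fin N) →ₗ[ℝ] EuclideanSpace ℝ (Fin N))
    (hW_pd : ∀ v : EuclideanSpace ℝ (Fin N), v ≠ 0 → 0 < ⟪v, W v⟫)
    (x y : EuclideanSpace ℝ (Fin N)) :
    ⟪gonzalezFlux f W x y, y - x⟫ = f y - f x := by
  unfold gonzalezFlux
  split_ifs with h
  · simp [h]
  · have hpos := hW_pd (y - x) (sub_ne_zero.mpr h)
    rw [inner_add_left, real_inner_smul_left, real_inner_comm (y - x) (W (y - x)),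
      div_mul_cancel₀ _ hpos.ne']
    ring

/-- Unconditional stability (discrete energy balance) of the Gonzalez-type scheme:
`Π(n+1) − Π(n) = −Δt ⟪w(n), C w(n)⟫`, with `v(n) = (u(n) − u(n−1))/Δt`,
`m(n) = (u(n) + u(n−1))/2`, `Π(n) = (1/2)⟪v(n), M v(n)⟫ + f(m(n))`, and
`w(n) = (u(n+1) − u(n−1))/(2Δt)`. -/
theorem gonzalez_scheme_energy_balance (N : ℕ)
    (f : EuclideanSpace ℝ (Fin N) → ℝ) (hf : Differentiable ℝ f)
    (W : EuclideanSpace ℝ (Fin N) →ₗ[ℝ] EuclideanSpace ℝ (Fin N))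
    (hW_sa : ∀ x y : EuclideanSpace ℝ (Fin N), ⟪W x, y⟫ = ⟪x, W y⟫)
    (hW_pd : ∀ v : EuclideanSpace ℝ (Fin N), v ≠ 0 → 0 < ⟪v, W v⟫)
    (Δt : ℝ) (hΔt : 0 < Δt)
    (M C : EuclideanSpace ℝ (Fin N) →ₗ[ℝ] EuclideanSpace ℝ (Fin N))
    (hM_sa : ∀ x y : EuclideanSpace ℝ (Fin N), ⟪M x, y⟫ = ⟪x, M y⟫)
    (hC_sa : ∀ x y : EuclideanSpace ℝ (Fin N), ⟪C x, y⟫ = ⟪x, C y⟫)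
    (u : ℕ → EuclideanSpace ℝ (Fin N))
    (hu : ∀ n, 1 ≤ n →
      M ((Δt ^ 2)⁻¹ • (u (n + 1) - (2 : ℝ) • u n + u (n - 1))) +
        C ((2 * Δt)⁻¹ • (u (n + 1) - u (n - 1))) +
        gonzalezFlux f W ((2 : ℝ)⁻¹ • (u n + u (n - 1)))
          ((2 : ℝ)⁻¹ • (u (n + 1) + u n)) = 0) :
    ∀ n, 1 ≤ n →
      ((1/2 : ℝ) * ⟪Δt⁻¹ • (u (n + 1) - u n), M (Δt⁻¹ • (u (n + 1) - u n))⟫ +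
          f ((2 : ℝ)⁻¹ • (u (n + 1) + u n))) -
        ((1/2 : ℝ) * ⟪Δt⁻¹ • (u n - u (n - 1)), M (Δt⁻¹ • (u n - u (n - 1)))⟫ +
          f ((2 : ℝ)⁻¹ • (u n + u (n - 1)))) =
      -Δt * ⟪(2 * Δt)⁻¹ • (u (n + 1) - u (n - 1)),
              C ((2 * Δt)⁻¹ • (u (n + 1) - u (n - 1)))⟫ := by
  intro n hn
  have hflux := inner_gonzalezFlux_sub f W hW_pd
    ((2 : ℝ)⁻¹ • (u n + u (n - 1))) ((2 : ℝ)⁻¹ • (u (n + 1) + u n))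
  have hscheme := hu n hn
  generalize gonzalezFlux f W ((2 : ℝ)⁻¹ • (u n + u (n - 1)))
    ((2 : ℝ)⁻¹ • (u (n + 1) + u n)) = G at hflux hscheme
  -- In terms of the increments `a = u(n+1) - u(n)` and `b = u(n) - u(n-1)`, the second
  -- difference is `a - b` and the centred difference is `a + b`.
  obtain ⟨a, ha⟩ : ∃ a, a = u (n + 1) - u n := ⟨_, rfl⟩
  obtain ⟨b, hb⟩ : ∃ b, b = u n - u (n - 1) := ⟨_, rfl⟩
  have hmid : (2 : ℝ)⁻¹ • (u (n + 1) + u n) - (2 : ℝ)⁻¹ • (u n + u (n - 1))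
      = (2 : ℝ)⁻¹ • (a + b) := by rw [ha, hb]; module
  have hsecond : u (n + 1) - (2 : ℝ) • u n + u (n - 1) = a - b := by rw [ha, hb]; module
  have hcentred : u (n + 1) - u (n - 1) = a + b := by rw [ha, hb]; module
  rw [hmid] at hflux
  rw [hsecond, hcentred] at hscheme
  rw [hcentred, ← ha, ← hb]
  have hpair := congrArg (fun z => ⟪z, (2 : ℝ)⁻¹ • (a + b)⟫) hscheme
  simp only [inner_add_left, inner_zero_left, hflux] at hpair
  have hMab : ⟪a, M b⟫ = ⟪b, M a⟫ := by rw [← hM_sa, real_inner_comm]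
  have hCab : ⟪a, C b⟫ = ⟪b, C a⟫ := by rw [← hC_sa, real_inner_comm]
  simp only [hM_sa, hC_sa, map_smul, map_add, map_sub, inner_add_left, inner_add_right,
    inner_sub_left, inner_sub_right, real_inner_smul_left, real_inner_smul_right,
    hMab, hCab] at hpair ⊢
  have hne := hΔt.ne'
  field_simp at hpair ⊢
  linear_combination hpair
end

section
/- Let E = EuclideanSpace ℝ (Fin N), let U ⊆ E be open and convex, and let f : U → ℝ be three times continuously differentiable. Let a, b ∈ U and suppose ‖iteratedFDeriv ℝ 3 f z‖ ≤ K for all z on the segment [a,b]. Then |f(b) − f(a) − (fderiv ℝ f ((a+b)/2)) (b − a)| ≤ (K/24) ‖b − a‖³. -/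
/-!
Restrict `f` to the line through the midpoint `c = (a + b) / 2` with direction
`h = (b - a) / 2`, and put `g t = f (c + t h)`. The function
`ψ t = g t - g (-t) - 2 t ġ(0)` vanishes at `0` with its first two derivatives: it is odd, and the
linear term is removed. Moreover `|ψ⁽³⁾| ≤ 2 M` on `[0, 1]` with `M = K ‖h‖ ^ 3`. Integrating this bound three times
gives `|ψ 1| ≤ M / 3 = K / 24 * ‖b - a‖ ^ 3`, and `ψ 1` is the quantity to estimate.
The one-variable estimate is `midpoint_bound_real`; `hasDerivAt_iteratedFDeriv_line` provides the
derivatives of `g`.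
-/

open RealInnerProductSpace

/-- The one-variable midpoint estimate on `[-1, 1]`; `g₁`, `g₂`, `g₃` are the successive
derivatives of `g₀`. -/
lemma midpoint_bound_real (g₀ g₁ g₂ g₃ : ℝ → ℝ) (M : ℝ)
    (h₀ : ∀ t ∈ Set.Icc (-1 : ℝ) 1, HasDerivAt g₀ (g₁ t) t)
    (h₁ : ∀ t ∈ Set.Icc (-1 : ℝ) 1, HasDerivAt g₁ (g₂ t) t)
    (h₂ : ∀ t ∈ Set.Icc (-1 : ℝ) 1, HasDerivAt g₂ (g₃ t) t)
    (hM : ∀ t ∈ Set.Icc (-1 : ℝ) 1, |g₃ t| ≤ M) :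
    |g₀ 1 - g₀ (-1) - 2 * g₁ 0| ≤ M / 3 := by
  have pos : ∀ t ∈ Set.Icc (0 : ℝ) 1, t ∈ Set.Icc (-1 : ℝ) 1 :=
    fun t ht => ⟨by linarith [ht.1], ht.2⟩
  have neg : ∀ t ∈ Set.Icc (0 : ℝ) 1, -t ∈ Set.Icc (-1 : ℝ) 1 :=
    fun t ht => ⟨by linarith [ht.2], by linarith [ht.1]⟩
  have refl_deriv : ∀ (u u' : ℝ → ℝ), (∀ t ∈ Set.Icc (-1 : ℝ) 1, HasDerivAt u (u' t) t) →
      ∀ t ∈ Set.Icc (0 : ℝ) 1, HasDerivAt (fun s => u (-s)) (-u' (-t)) t := by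
    intro u u' hu t ht
    exact ((hu (-t) (neg t ht)).comp t (hasDerivAt_neg t)).congr_deriv (by ring)
  -- A bound on the derivative over `[0, 1]` integrates to a bound on the function.
  have fence : ∀ (u u' B B' : ℝ → ℝ), (∀ t ∈ Set.Icc (0 : ℝ) 1, HasDerivAt u (u' t) t) →
      u 0 = 0 → B 0 = 0 → (∀ t, HasDerivAt B (B' t) t) →
      (∀ t ∈ Set.Icc (0 : ℝ) 1, |u' t| ≤ B' t) → ∀ t ∈ Set.Icc (0 : ℝ) 1, |u t| ≤ B t := by
    intro u u' B B' hu hu0 hB0 hB hb t ht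
    exact image_norm_le_of_norm_deriv_right_le_deriv_boundary
      (fun s hs => (hu s hs).continuousAt.continuousWithinAt)
      (fun s hs => (hu s (Set.Ico_subset_Icc_self hs)).hasDerivWithinAt)
      (by simp [hu0, hB0]) hB (fun s hs => hb s (Set.Ico_subset_Icc_self hs)) ht
  have b₂ := fence (fun t => g₂ t - g₂ (-t)) (fun t => g₃ t + g₃ (-t))
    (fun t => 2 * M * t) (fun _ => 2 * M)
    (fun t ht =>
      ((h₂ t (pos t ht)).sub (refl_deriv g₂ g₃ h₂ t ht)).congr_deriv (by ring))
    (by simp) (by simp)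
    (fun t => by simpa using (hasDerivAt_id t).const_mul (2 * M))
    (fun t ht => (abs_add_le _ _).trans
      (by linarith [hM t (pos t ht), hM (-t) (neg t ht)]))
  have b₁ := fence (fun t => g₁ t + g₁ (-t) - 2 * g₁ 0) (fun t => g₂ t - g₂ (-t))
    (fun t => M * t ^ 2) (fun t => 2 * M * t)
    (fun t ht =>
      (((h₁ t (pos t ht)).add (refl_deriv g₁ g₂ h₁ t ht)).sub_const (2 * g₁ 0)).congr_deriv
        (by ring))
    (by simp; ring) (by simp)
    (fun t => ((hasDerivAt_pow 2 t).const_mul M).congr_deriv (by push_cast; ring))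
    b₂
  have b₀ := fence (fun t => g₀ t - g₀ (-t) - 2 * g₁ 0 * t)
    (fun t => g₁ t + g₁ (-t) - 2 * g₁ 0)
    (fun t => M / 3 * t ^ 3) (fun t => M * t ^ 2)
    (fun t ht =>
      (((h₀ t (pos t ht)).sub (refl_deriv g₀ g₁ h₀ t ht)).sub
        ((hasDerivAt_id t).const_mul (2 * g₁ 0))).congr_deriv (by ring))
    (by simp) (by simp)
    (fun t => ((hasDerivAt_pow 3 t).const_mul (M / 3)).congr_deriv (by push_cast; ring))
    b₁
  simpa using b₀ 1 (by simp)

lemma hasDerivAt_iteratedFDeriv_line {E : Type*} [NormedAddCommGroup E] [NormedSpace ℝ E]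
    {f : E → ℝ} {c h : E} {t : ℝ} {n : ℕ} {m : WithTop ℕ∞}
    (hf : ContDiffAt ℝ m f (c + t • h)) (hn : (n : WithTop ℕ∞) < m) :
    HasDerivAt (fun s : ℝ => iteratedFDeriv ℝ n f (c + s • h) (fun _ => h))
      (iteratedFDeriv ℝ (n + 1) f (c + t • h) (fun _ => h)) t := by
  have hline : HasDerivAt (fun s : ℝ => c + s • h) h t := by
    simpa using ((hasDerivAt_id t).smul_const h).const_add c
  have hD := (hf.differentiableAt_iteratedFDeriv hn).hasFDerivAt.comp_hasDerivAt t hline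
  exact ((ContinuousMultilinearMap.apply ℝ (fun _ : Fin n => E) ℝ
    (fun _ => h)).hasFDerivAt.comp_hasDerivAt t hD)

/-- Cubic midpoint-remainder bound: if `f` is `C³` on an open convex set `U` containing
`a` and `b`, and the third derivative is bounded by `K` on the segment `[a, b]`, then
`|f(b) − f(a) − Df((a+b)/2)(b − a)| ≤ (K/24)‖b − a‖³`. -/
theorem midpoint_taylor_remainder_bound (N : ℕ)
    (U : Set (EuclideanSpace ℝ (Fin N))) (hU_open : IsOpen U) (hU_conv : Convex ℝ U)
    (f : EuclideanSpace ℝ (Fin N) → ℝ) (hf : ContDiffOn ℝ 3 f U)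
    (a b : EuclideanSpace ℝ (Fin N)) (ha : a ∈ U) (hb : b ∈ U)
    (K : ℝ)
    (hK : ∀ z ∈ segment ℝ a b, ‖iteratedFDeriv ℝ 3 f z‖ ≤ K) :
    |f b - f a - (fderiv ℝ f ((2 : ℝ)⁻¹ • (a + b))) (b - a)| ≤
      K / 24 * ‖b - a‖ ^ 3 := by
  set c := (2 : ℝ)⁻¹ • (a + b) with hc
  set h := (2 : ℝ)⁻¹ • (b - a) with hh
  have hseg : ∀ t ∈ Set.Icc (-1 : ℝ) 1, c + t • h ∈ segment ℝ a b := by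
    intro t ht
    refine ⟨(1 - t) / 2, (1 + t) / 2, by linarith [ht.2], by linarith [ht.1], by ring, ?_⟩
    rw [hc, hh]
    module
  have hcd : ∀ t ∈ Set.Icc (-1 : ℝ) 1, ContDiffAt ℝ 3 f (c + t • h) := fun t ht =>
    hf.contDiffAt (hU_open.mem_nhds (hU_conv.segment_subset ha hb (hseg t ht)))
  have key := midpoint_bound_real
    (fun t => iteratedFDeriv ℝ 0 f (c + t • h) (fun _ => h))
    (fun t => iteratedFDeriv ℝ 1 f (c + t • h) (fun _ => h))
    (fun t => iteratedFDeriv ℝ 2 f (c + t • h) (fun _ => h))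
    (fun t => iteratedFDeriv ℝ 3 f (c + t • h) (fun _ => h)) (K * ‖h‖ ^ 3)
    (fun t ht => hasDerivAt_iteratedFDeriv_line (hcd t ht) (by norm_num))
    (fun t ht => hasDerivAt_iteratedFDeriv_line (hcd t ht) (by norm_num))
    (fun t ht => hasDerivAt_iteratedFDeriv_line (hcd t ht) (by norm_num))
    (fun t ht => by
      have h1 := (iteratedFDeriv ℝ 3 f (c + t • h)).le_opNorm (fun _ => h)
      rw [Finset.prod_const, Finset.card_univ, Fintype.card_fin] at h1
      exact h1.trans (by gcongr; exact hK _ (hseg t ht)))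
  have e1 : c + (1 : ℝ) • h = b := by rw [hc, hh]; module
  have e2 : c + (-1 : ℝ) • h = a := by rw [hc, hh]; module
  have e3 : b - a = (2 : ℝ) • h := by rw [hh]; module
  simp only [e1, e2, iteratedFDeriv_zero_apply, iteratedFDeriv_one_apply, zero_smul,
    add_zero] at key
  rw [e3, map_smul, smul_eq_mul, norm_smul, Real.norm_ofNat]
  calc _ ≤ K * ‖h‖ ^ 3 / 3 := key
    _ = K / 24 * (2 * ‖h‖) ^ 3 := by ring
end

section
/- Let E = EuclideanSpace ℝ (Fin N), let d ∈ ℕ, and let f : E → ℝ be C^∞ with iteratedFDeriv ℝ κ f x = 0 for all κ > d and all x ∈ E. Define the Taylor-series flux g : E × E → E by ⟪g(x,Δ), e⟫ = Σ_{κ=1}^{d} (1/κ!) (iteratedFDeriv ℝ κ f x) applied to (κ−1) copies of Δ followed by e. Let Δt > 0 and let M, C : E →ₗ[ℝ] E be self-adjoint. Suppose u : ℕ → E satisfies, for all n ≥ 1, M((u(n+1) − 2u(n) + u(n−1))/Δt²) + C((u(n+1) − u(n−1))/(2Δt)) + g(m(n), m(n+1) − m(n)) = 0, where m(n) := (u(n)+u(n−1))/2.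 Then with v(n) := (u(n) − u(n−1))/Δt, Π(n) := (1/2)⟪v(n), M v(n)⟫ + f(m(n)), and w(n) := (u(n+1) − u(n−1))/(2Δt), one has Π(n+1) − Π(n) = −Δt ⟪w(n), C w(n)⟫ for all n ≥ 1. -/
/-!
Pairing the scheme with `Δ = m(n+1) − m(n) = (u(n+1) − u(n−1)) / 2` gives the energy balance.
The flux is built so that `⟪g x Δ, Δ⟫` is the Taylor expansion of `f (x + Δ) - f x`, which is exact
because the derivatives of `f` of order greater than `d` vanish (`taylor_exact`). In the inertia
term, `u(n+1) − 2u(n) + u(n−1)` and `2Δ` are the difference and the sum of the two increments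
`u(n+1) − u(n)` and `u(n) − u(n−1)`, so the symmetry of `M` turns it into the difference of the
kinetic energies. The damping term is `Δt ⟪w(n), C w(n)⟫`.
-/

open RealInnerProductSpace

/-- Differentiating the Taylor polynomial in its base point: with `h k` in the role of the `k`-th
derivative, the sum telescopes and only the top-order term survives. -/
lemma hasDerivAt_taylor_base (h : ℕ → ℝ → ℝ) (hd : ∀ k t, HasDerivAt (h k) (h (k + 1) t) t)
    (n : ℕ) (t : ℝ) :
    HasDerivAt (fun t => ∑ k ∈ Finset.range (n + 1), (k.factorial : ℝ)⁻¹ * ((1 - t) ^ k * h k t))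
      ((n.factorial : ℝ)⁻¹ * ((1 - t) ^ n * h (n + 1) t)) t := by
  induction n with
  | zero => simpa using hd 0 t
  | succ n ih =>
    have hp : HasDerivAt (fun t : ℝ => (1 - t) ^ (n + 1))
        (((n + 1 : ℕ) : ℝ) * (1 - t) ^ n * (-1)) t := by
      exact ((hasDerivAt_id t).const_sub 1).pow (n + 1)
    have h1 := ih.add ((hp.mul (hd (n + 1) t)).const_mul (((n + 1).factorial : ℝ)⁻¹))
    simp_rw [Finset.sum_range_succ _ (n + 1)]
    refine h1.congr_deriv ?_
    have h2 : (n.factorial : ℝ) ≠ 0 := by positivity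
    have h3 : (n : ℝ) + 1 ≠ 0 := by positivity
    rw [Nat.factorial_succ]
    push_cast
    field_simp
    ring

/-- A smooth function whose derivatives of order greater than `d` vanish equals its Taylor
polynomial of order `d`. -/
lemma taylor_exact {E : Type*} [NormedAddCommGroup E] [NormedSpace ℝ E] (d : ℕ)
    (f : E → ℝ) (hf : ContDiff ℝ (⊤ : ℕ∞) f)
    (hpoly : ∀ κ : ℕ, d < κ → ∀ x : E, iteratedFDeriv ℝ κ f x = 0) (x Δ : E) :
    f (x + Δ) - f x = ∑ κ ∈ Finset.Icc 1 d, (κ.factorial : ℝ)⁻¹ *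
        (iteratedFDeriv ℝ κ f x) (fun _ => Δ) := by
  let h : ℕ → ℝ → ℝ := fun k t => iteratedFDeriv ℝ k f (x + t • Δ) (fun _ => Δ)
  have hd : ∀ k t, HasDerivAt (h k) (h (k + 1) t) t := by
    intro k t
    have hl : HasDerivAt (fun t : ℝ => x + t • Δ) Δ t := by
      simpa using ((hasDerivAt_id t).smul_const Δ).const_add x
    have hD : DifferentiableAt ℝ (iteratedFDeriv ℝ k f) (x + t • Δ) :=
      (hf.differentiable_iteratedFDeriv (by exact_mod_cast WithTop.coe_lt_top k)) _
    have h2 := hD.hasFDerivAt.comp_hasDerivAt t hl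
    have h3 := (ContinuousMultilinearMap.apply ℝ (fun _ : Fin k => E) ℝ
      (fun _ => Δ)).hasFDerivAt.comp_hasDerivAt t h2
    exact h3
  let φ : ℝ → ℝ := fun t =>
    ∑ k ∈ Finset.range (d + 1), (k.factorial : ℝ)⁻¹ * ((1 - t) ^ k * h k t)
  have hφ : ∀ t, HasDerivAt φ 0 t := fun t => by
    have h1 := hasDerivAt_taylor_base h hd d t
    have h2 : h (d + 1) t = 0 := by simp [h, hpoly (d + 1) (Nat.lt_succ_self d)]
    simpa [h2] using h1
  have hc : φ 1 = φ 0 :=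
    is_const_of_deriv_eq_zero (fun t => (hφ t).differentiableAt) (fun t => (hφ t).deriv) 1 0
  have h1 : φ 1 = f (x + Δ) := by
    simp only [φ]
    rw [Finset.sum_range_succ', Finset.sum_eq_zero]
    · simp [h]
    · intro k _
      simp
  have h0 : φ 0 = f x + ∑ κ ∈ Finset.Icc 1 d, (κ.factorial : ℝ)⁻¹ *
        (iteratedFDeriv ℝ κ f x) (fun _ => Δ) := by
    have hr : Finset.range (d + 1) = insert 0 (Finset.Icc 1 d) := by
      ext k
      simp only [Finset.mem_range, Finset.mem_insert, Finset.mem_Icc]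
      omega
    simp only [φ]
    rw [hr, Finset.sum_insert (by simp)]
    simp [h]
  linarith

/-- Unconditional stability (discrete energy balance) of the Taylor-series scheme:
with `m(n) = (u(n)+u(n−1))/2`, `v(n) = (u(n)−u(n−1))/Δt`,
`Π(n) = (1/2)⟪v(n), M v(n)⟫ + f(m(n))`, and `w(n) = (u(n+1)−u(n−1))/(2Δt)`,
the scheme satisfies `Π(n+1) − Π(n) = −Δt ⟪w(n), C w(n)⟫`. -/
theorem taylor_scheme_energy_balance (N d : ℕ)
    (f : EuclideanSpace ℝ (Fin N) → ℝ) (hf : ContDiff ℝ (⊤ : ℕ∞) f)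
    (hpoly : ∀ κ : ℕ, d < κ → ∀ x : EuclideanSpace ℝ (Fin N), iteratedFDeriv ℝ κ f x = 0)
    (g : EuclideanSpace ℝ (Fin N) → EuclideanSpace ℝ (Fin N) → EuclideanSpace ℝ (Fin N))
    (hg : ∀ x Δ e : EuclideanSpace ℝ (Fin N), ⟪g x Δ, e⟫ =
      ∑ κ ∈ Finset.Icc 1 d, (κ.factorial : ℝ)⁻¹ *
        (iteratedFDeriv ℝ κ f x) (fun i : Fin κ => if (i : ℕ) + 1 = κ then e else Δ))
    (Δt : ℝ) (hΔt : 0 < Δt)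
    (M C : EuclideanSpace ℝ (Fin N) →ₗ[ℝ] EuclideanSpace ℝ (Fin N))
    (hM_sa : ∀ x y : EuclideanSpace ℝ (Fin N), ⟪M x, y⟫ = ⟪x, M y⟫)
    (hC_sa : ∀ x y : EuclideanSpace ℝ (Fin N), ⟪C x, y⟫ = ⟪x, C y⟫)
    (u : ℕ → EuclideanSpace ℝ (Fin N))
    (hu : ∀ n, 1 ≤ n →
      M ((Δt ^ 2)⁻¹ • (u (n + 1) - (2 : ℝ) • u n + u (n - 1))) +
        C ((2 * Δt)⁻¹ • (u (n + 1) - u (n - 1))) +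
        g ((2 : ℝ)⁻¹ • (u n + u (n - 1)))
          ((2 : ℝ)⁻¹ • (u (n + 1) + u n) - (2 : ℝ)⁻¹ • (u n + u (n - 1))) = 0) :
    ∀ n, 1 ≤ n →
      ((1/2 : ℝ) * ⟪Δt⁻¹ • (u (n + 1) - u n), M (Δt⁻¹ • (u (n + 1) - u n))⟫ +
          f ((2 : ℝ)⁻¹ • (u (n + 1) + u n))) -
        ((1/2 : ℝ) * ⟪Δt⁻¹ • (u n - u (n - 1)), M (Δt⁻¹ • (u n - u (n - 1)))⟫ +
          f ((2 : ℝ)⁻¹ • (u n + u (n - 1)))) =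
      -Δt * ⟪(2 * Δt)⁻¹ • (u (n + 1) - u (n - 1)),
              C ((2 * Δt)⁻¹ • (u (n + 1) - u (n - 1)))⟫ := by
  intro n hn
  have hs := hu n hn
  generalize u (n + 1) = a at *
  generalize u (n - 1) = c at *
  generalize u n = b at *
  set x := (2 : ℝ)⁻¹ • (b + c) with hx
  set y := (2 : ℝ)⁻¹ • (a + b) with hy
  have hflux : ⟪g x (y - x), y - x⟫ = f y - f x := by
    rw [hg]
    simp only [ite_self]
    rw [← taylor_exact d f hf hpoly x (y - x), add_sub_cancel]
  -- `p` and `q` are the two consecutive increments of `u`.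
  obtain ⟨p, hp⟩ : ∃ p, p = a - b := ⟨_, rfl⟩
  obtain ⟨q, hq⟩ : ∃ q, q = b - c := ⟨_, rfl⟩
  have e1 : a - (2 : ℝ) • b + c = p - q := by rw [hp, hq]; module
  have e2 : a - c = p + q := by rw [hp, hq]; module
  have e3 : y - x = (2 : ℝ)⁻¹ • (p + q) := by rw [hp, hq, hx, hy]; module
  have hpair := congrArg (fun z => ⟪z, y - x⟫) hs
  simp only [inner_add_left, hflux, inner_zero_left] at hpair
  rw [e1, e2, e3] at hpair
  rw [e2, ← hp, ← hq]
  have hpq : ⟪M p, q⟫ = ⟪M q, p⟫ := by rw [hM_sa, real_inner_comm]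
  have hcc := hC_sa (p + q) (p + q)
  have hpp := hM_sa p p
  have hqq := hM_sa q q
  simp only [map_smul, map_sub, inner_smul_left, inner_smul_right, inner_sub_left,
    inner_add_right (𝕜 := ℝ) (M _), conj_trivial] at hpair ⊢
  rw [hcc, hpp, hqq, hpq] at hpair
  have h0 : Δt ≠ 0 := hΔt.ne'
  field_simp at hpair ⊢
  linarith
end

section
/- Let E = EuclideanSpace ℝ (Fin N), let d ∈ ℕ, and let f : E → ℝ be C^∞ with iteratedFDeriv ℝ κ f x = 0 for all κ > d and all x ∈ E. Define the Taylor-series flux g : E × E → E by ⟪g(x,Δ), e⟫ = Σ_{κ=1}^{d} (1/κ!) (iteratedFDeriv ℝ κ f x) applied to (κ−1) copies of Δ followed by e. Then for every fixed x ∈ E the map Δ ↦ g(x,Δ) is differentiable, and its Fréchet derivative at every Δ ∈ E is a self-adjoint linear operator on E; that is, ⟪(fderiv ℝ (g(x,·)) Δ) h, e⟫ = ⟪(fderiv ℝ (g(x,·)) Δ) e, h⟫ for all Δ, h, e ∈ E. -/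
/-!
The inner product `⟪g x Δ, e⟫` is a linear combination of the terms `Dᵏf(x)(Δ, …, Δ, e)`. Each is
the restriction of a continuous multilinear map, so it is differentiable in `Δ`, with derivative in
the direction `h` equal to the sum, over the slots `i` other than the last, of
`Dᵏf(x)(Δ, …, h, …, Δ, e)` with `h` in slot `i`. Exchanging `h` and `e` amounts to transposing slot
`i` with the last one, which changes nothing because `Dᵏf(x)` is symmetric.

Mathlib states the symmetry of iterated derivatives for analytic functions and for second
derivatives of real `C²` functions. For smooth functions of any order it is derived in
`iteratedFDeriv_comp_perm_of_smooth` from the second-order case: adjacent transpositions generate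
the symmetric group, and each of them is handled by peeling off the trailing slots
(`iteratedFDeriv_comp_swap_adjacent`).
-/

open RealInnerProductSpace

section Symmetry

universe u

variable {E : Type u} [NormedAddCommGroup E] [NormedSpace ℝ E]

/-- `Dⁿ⁺²f(x)` is symmetric in its last two slots: it is `Dⁿ(D²f)(x)`, and `D²f` is fixed by
`flip`, a continuous linear map that commutes with iterated differentiation. -/
lemma iteratedFDeriv_comp_swap_last {F : Type*} [NormedAddCommGroup F] [NormedSpace ℝ F]
    {f : E → F} (hf : ContDiff ℝ (⊤ : ℕ∞) f) (n : ℕ) (x : E) (v : Fin (n + 2) → E) :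
    iteratedFDeriv ℝ (n + 2) f x
        (v ∘ Equiv.swap (Fin.last n).castSucc (Fin.last (n + 1))) =
      iteratedFDeriv ℝ (n + 2) f x v := by
  have hf1 : ContDiff ℝ (⊤ : ℕ∞) (fderiv ℝ f) := hf.fderiv_right (by simp)
  have hf2 : ContDiff ℝ (⊤ : ℕ∞) (fderiv ℝ (fderiv ℝ f)) := hf1.fderiv_right (by simp)
  let L : (E →L[ℝ] E →L[ℝ] F) →L[ℝ] (E →L[ℝ] E →L[ℝ] F) :=
    (ContinuousLinearMap.flipₗᵢ ℝ E E F).toContinuousLinearEquiv.toContinuousLinearMap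
  have hflip : L ∘ fderiv ℝ (fderiv ℝ f) = fderiv ℝ (fderiv ℝ f) := by
    funext y
    ext a b
    have hs : IsSymmSndFDerivAt ℝ f y :=
      hf.contDiffAt.isSymmSndFDerivAt (by
        simpa using WithTop.coe_le_coe.2 (le_top : (2 : ℕ∞) ≤ ⊤))
    exact hs.eq b a
  have key : iteratedFDeriv ℝ n (fderiv ℝ (fderiv ℝ f)) x =
      L.compContinuousMultilinearMap
        (iteratedFDeriv ℝ n (fderiv ℝ (fderiv ℝ f)) x) := by
    conv_lhs => rw [← hflip]
    exact ContinuousLinearMap.iteratedFDeriv_comp_left (F := E →L[ℝ] E →L[ℝ] F)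
      (G := E →L[ℝ] E →L[ℝ] F) L
      hf2.contDiffAt (by exact_mod_cast le_top)
  have hinit : Fin.init (Fin.init
      (v ∘ Equiv.swap (Fin.last n).castSucc (Fin.last (n + 1)))) = Fin.init (Fin.init v) := by
    funext i
    simp only [Fin.init, Function.comp_apply]
    rw [Equiv.swap_apply_of_ne_of_ne]
    · simp [Fin.ext_iff, i.isLt.ne]
    · simp only [ne_eq, Fin.ext_iff, Fin.val_castSucc, Fin.val_last]
      omega
  rw [iteratedFDeriv_succ_apply_right, iteratedFDeriv_succ_apply_right,
    iteratedFDeriv_succ_apply_right, iteratedFDeriv_succ_apply_right, hinit]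
  conv_lhs => rw [key]
  simp [L, Fin.init]

lemma iteratedFDeriv_comp_swap_adjacent (n : ℕ) :
    ∀ {F : Type u} [NormedAddCommGroup F] [NormedSpace ℝ F]
      {f : E → F}, ContDiff ℝ (⊤ : ℕ∞) f → ∀ (x : E) (v : Fin (n + 1) → E) (i : Fin n),
      iteratedFDeriv ℝ (n + 1) f x (v ∘ Equiv.swap i.castSucc i.succ) =
        iteratedFDeriv ℝ (n + 1) f x v := by
  induction n with
  | zero => intro F _ _ f _ x v i; exact i.elim0
  | succ n ih =>
    intro F _ _ f hf x v i
    induction i using Fin.lastCases with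
    | last => exact iteratedFDeriv_comp_swap_last hf n x v
    | cast i =>
      have hinit : Fin.init (v ∘ Equiv.swap i.castSucc.castSucc i.castSucc.succ) =
          Fin.init v ∘ Equiv.swap i.castSucc i.succ := by
        funext j
        simp only [Fin.init, Function.comp_apply, Fin.succ_castSucc]
        rw [(Fin.castSucc_injective _).map_swap]
      have hlast : Equiv.swap i.castSucc.castSucc i.castSucc.succ (Fin.last (n + 1)) =
          Fin.last (n + 1) := by
        apply Equiv.swap_apply_of_ne_of_ne
        · simp only [ne_eq, Fin.ext_iff, Fin.val_castSucc, Fin.val_last]; omega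
        · simp only [ne_eq, Fin.ext_iff, Fin.val_castSucc, Fin.val_last, Fin.val_succ]; omega
      rw [iteratedFDeriv_succ_apply_right (n := n + 1) (m := v),
        iteratedFDeriv_succ_apply_right (n := n + 1), hinit,
        ih (f := fderiv ℝ f) (hf.fderiv_right (by simp)), Function.comp_apply, hlast]

theorem iteratedFDeriv_comp_perm_of_smooth {F : Type u} [NormedAddCommGroup F] [NormedSpace ℝ F]
    {f : E → F} (hf : ContDiff ℝ (⊤ : ℕ∞) f) (n : ℕ) (x : E) (v : Fin n → E)
    (σ : Equiv.Perm (Fin n)) :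
    iteratedFDeriv ℝ n f x (v ∘ σ) = iteratedFDeriv ℝ n f x v := by
  cases n with
  | zero => congr 1; exact Subsingleton.elim _ _
  | succ n =>
    have hσ : σ ∈ Submonoid.closure
        (Set.range fun i : Fin n ↦ Equiv.swap i.castSucc i.succ) := by
      rw [Equiv.Perm.mclosure_swap_castSucc_succ]; trivial
    induction hσ using Submonoid.closure_induction generalizing v with
    | mem τ hτ =>
      obtain ⟨i, rfl⟩ := hτ
      exact iteratedFDeriv_comp_swap_adjacent n hf x v i
    | one => rfl
    | mul τ₁ τ₂ _ _ h₁ h₂ =>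
      rw [Equiv.Perm.coe_mul, ← Function.comp_assoc, h₂, h₁]

end Symmetry

section Flux

variable {E : Type*} [NormedAddCommGroup E] [NormedSpace ℝ E]

/-- The derivative of `Δ ↦ A (Δ, …, Δ, e)`. The last slot is constant in `Δ`, so it contributes
the zero map. -/
lemma hasFDerivAt_apply_last {κ : ℕ} (A : ContinuousMultilinearMap ℝ (fun _ : Fin κ => E) ℝ)
    (Δ e : E) :
    HasFDerivAt (fun Δ : E => A (fun i : Fin κ => if (i : ℕ) + 1 = κ then e else Δ))
      (∑ i : Fin κ, (A.toContinuousLinearMap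
        (fun j : Fin κ => if (j : ℕ) + 1 = κ then e else Δ) i) ∘L
          (if (i : ℕ) + 1 = κ then 0 else ContinuousLinearMap.id ℝ E)) Δ := by
  apply HasFDerivAt.multilinear_comp (f := A)
    (g := fun (i : Fin κ) (Δ : E) => if (i : ℕ) + 1 = κ then e else Δ)
  intro i
  split_ifs
  · exact hasFDerivAt_const e Δ
  · exact hasFDerivAt_id Δ

lemma sum_toContinuousLinearMap_symm {κ : ℕ}
    (A : ContinuousMultilinearMap ℝ (fun _ : Fin κ => E) ℝ)
    (hA : ∀ (v : Fin κ → E) (σ : Equiv.Perm (Fin κ)), A (v ∘ σ) = A v) (Δ h e : E) :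
    (∑ i : Fin κ, (A.toContinuousLinearMap
        (fun j : Fin κ => if (j : ℕ) + 1 = κ then e else Δ) i) ∘L
          (if (i : ℕ) + 1 = κ then 0 else ContinuousLinearMap.id ℝ E)) h =
    (∑ i : Fin κ, (A.toContinuousLinearMap
        (fun j : Fin κ => if (j : ℕ) + 1 = κ then h else Δ) i) ∘L
          (if (i : ℕ) + 1 = κ then 0 else ContinuousLinearMap.id ℝ E)) e := by
  simp only [sum_apply]
  refine Finset.sum_congr rfl fun i _ => ?_
  by_cases hi : (i : ℕ) + 1 = κ
  · simp [hi]
  · simp only [hi, if_false, ContinuousLinearMap.comp_apply, ContinuousLinearMap.id_apply,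
      ContinuousMultilinearMap.toContinuousLinearMap_apply]
    have hκ : κ - 1 < κ := by have := i.isLt; omega
    -- transposing slot `i` with the last slot `κ - 1` exchanges `h` and `e`
    rw [← hA _ (Equiv.swap i ⟨κ - 1, hκ⟩)]
    congr 1
    funext j
    have hij : i ≠ ⟨κ - 1, hκ⟩ := by
      intro hc; apply hi; rw [hc]; simp only; omega
    rw [Function.comp_apply]
    by_cases hj : j = i
    · subst hj
      rw [Equiv.swap_apply_left, Function.update_of_ne hij.symm, Function.update_self,
        if_pos (by simp only; omega)]
    · by_cases hl : j = ⟨κ - 1, hκ⟩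
      · subst hl
        rw [Equiv.swap_apply_right, Function.update_self, Function.update_of_ne hij.symm,
          if_pos (by simp only; omega)]
      · have hl' : ¬ ((j : ℕ) + 1 = κ) := by
          intro hc; apply hl; ext; simp only; omega
        rw [Equiv.swap_apply_of_ne_of_ne hj hl, Function.update_of_ne hj,
          Function.update_of_ne hj, if_neg hl', if_neg hl']

end Flux

/-- Symmetry of the tangent of the Taylor-series flux: for each fixed `x`, the map
`Δ ↦ g(x,Δ)` is differentiable and its Fréchet derivative at every point is a
self-adjoint operator. -/
theorem taylorFlux_tangent_symmetric (N d : ℕ)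
    (f : EuclideanSpace ℝ (Fin N) → ℝ) (hf : ContDiff ℝ (⊤ : ℕ∞) f)
    (hpoly : ∀ κ : ℕ, d < κ → ∀ x : EuclideanSpace ℝ (Fin N), iteratedFDeriv ℝ κ f x = 0)
    (g : EuclideanSpace ℝ (Fin N) → EuclideanSpace ℝ (Fin N) → EuclideanSpace ℝ (Fin N))
    (hg : ∀ x Δ e : EuclideanSpace ℝ (Fin N), ⟪g x Δ, e⟫ =
      ∑ κ ∈ Finset.Icc 1 d, (κ.factorial : ℝ)⁻¹ *
        (iteratedFDeriv ℝ κ f x) (fun i : Fin κ => if (i : ℕ) + 1 = κ then e else Δ)) :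
    ∀ x : EuclideanSpace ℝ (Fin N),
      Differentiable ℝ (g x) ∧
      ∀ Δ h e : EuclideanSpace ℝ (Fin N),
        ⟪(fderiv ℝ (g x) Δ) h, e⟫ = ⟪(fderiv ℝ (g x) Δ) e, h⟫ := by
  intro x
  have hder : ∀ Δ e, HasFDerivAt (fun Δ => ⟪g x Δ, e⟫) (∑ κ ∈ Finset.Icc 1 d,
      (κ.factorial : ℝ)⁻¹ • ∑ i : Fin κ, ((iteratedFDeriv ℝ κ f x).toContinuousLinearMap
        (fun j : Fin κ => if (j : ℕ) + 1 = κ then e else Δ) i) ∘L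
          (if (i : ℕ) + 1 = κ then 0 else
            ContinuousLinearMap.id ℝ (EuclideanSpace ℝ (Fin N)))) Δ := by
    intro Δ e
    simp only [hg]
    exact HasFDerivAt.fun_sum fun κ _ => (hasFDerivAt_apply_last _ Δ e).const_mul _
  have hdiff : Differentiable ℝ (g x) := by
    rw [differentiable_euclidean]
    intro i Δ
    have h := (hder Δ (EuclideanSpace.single i 1)).differentiableAt
    simpa [EuclideanSpace.inner_single_right] using h
  refine ⟨hdiff, fun Δ h e => ?_⟩
  have hin : ∀ h e, ⟪(fderiv ℝ (g x) Δ) h, e⟫ = fderiv ℝ (fun Δ => ⟪g x Δ, e⟫) Δ h := by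
    intro h e
    rw [fderiv_inner_apply ℝ (hdiff Δ) (differentiableAt_const e)]
    simp
  rw [hin, hin, (hder Δ e).fderiv, (hder Δ h).fderiv]
  rw [sum_apply, sum_apply]
  refine Finset.sum_congr rfl fun κ _ => ?_
  rw [smul_apply, smul_apply,
    sum_toContinuousLinearMap_symm _
      (fun v σ => iteratedFDeriv_comp_perm_of_smooth hf κ x v σ) Δ h e]
end

section
/- Let E = EuclideanSpace ℝ (Fin N), let d ∈ ℕ, and let f : E → ℝ be C^∞ with iteratedFDeriv ℝ κ f x = 0 for all κ > d and all x ∈ E. Define the Taylor-series flux g : E × E → E by ⟪g(x,Δ), e⟫ = Σ_{κ=1}^{d} (1/κ!) (iteratedFDeriv ℝ κ f x) applied to (κ−1) copies of Δ followed by e. Then for every x ∈ E and every R > 0 there exists a constant C₀ ≥ 0 such that for all Δ ∈ E with ‖Δ‖ ≤ R, ‖g(x,Δ) − ∇f(x + Δ/2)‖ ≤ C₀ ‖Δ‖². -/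
open RealInnerProductSpace

/-!
Tested against a vector `e`, the first two terms of the flux are `Df(x) e + ½ D²f(x)(Δ, e)`, which
is also the first-order Taylor polynomial of `h ↦ Df(x + h) e` at `h = Δ/2`. The terms of the flux
of order `κ ≥ 3` are bounded by `‖D^κ f(x)‖ R^(κ-3) ‖Δ‖² ‖e‖` (`norm_flux_term_le`), and the
first-order Taylor remainder of `Df` is quadratic, uniformly on balls (`fderiv_remainder_le`).
Taking `e` to be the difference of flux and gradient turns the tested bound into a norm bound.
-/

/-- Quadratic first-order Taylor remainder for a `C²` map, with a constant uniform on a ball: the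
derivative is Lipschitz on the compact ball, and the mean value inequality is applied to
`y ↦ F y - DF(x) y` on the smaller ball of radius `‖h‖`. -/
lemma fderiv_remainder_le {E G : Type*} [NormedAddCommGroup E] [NormedSpace ℝ E]
    [ProperSpace E] [NormedAddCommGroup G] [NormedSpace ℝ G] {F : E → G}
    (hF : ContDiff ℝ 2 F) (x : E) (R : ℝ) :
    ∃ K : ℝ, 0 ≤ K ∧ ∀ h : E, ‖h‖ ≤ R →
      ‖F (x + h) - F x - fderiv ℝ F x h‖ ≤ K * ‖h‖ ^ 2 := by
  have hF' : ContDiff ℝ 1 (fderiv ℝ F) := hF.fderiv_right (by norm_num)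
  have hd : Differentiable ℝ F := hF.differentiable (by norm_num)
  have hd' : Differentiable ℝ (fderiv ℝ F) := hF'.differentiable (by norm_num)
  obtain ⟨K, hK⟩ := (isCompact_closedBall x R).exists_bound_of_continuousOn
    (hF'.continuous_fderiv (by norm_num)).continuousOn
  refine ⟨|K|, abs_nonneg K, fun h hh => ?_⟩
  have key : ∀ y ∈ Metric.closedBall x ‖h‖, ‖fderiv ℝ F y - fderiv ℝ F x‖ ≤ |K| * ‖h‖ := by
    intro y hy
    have hxR : x ∈ Metric.closedBall x R :=
      Metric.mem_closedBall_self ((norm_nonneg h).trans hh)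
    have hyR : y ∈ Metric.closedBall x R := Metric.closedBall_subset_closedBall hh hy
    refine ((convex_closedBall x R).norm_image_sub_le_of_norm_fderiv_le (𝕜 := ℝ)
      (fun z _ => hd' z) (fun z hz => (hK z hz).trans (le_abs_self K)) hxR hyR).trans ?_
    gcongr
    simpa [dist_eq_norm] using hy
  have hmv := (convex_closedBall x ‖h‖).norm_image_sub_le_of_norm_hasFDerivWithin_le
    (f := fun y => F y - fderiv ℝ F x y)
    (fun y _ => ((hd y).hasFDerivAt.sub (fderiv ℝ F x).hasFDerivAt).hasFDerivWithinAt) key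
    (Metric.mem_closedBall_self (norm_nonneg h)) (y := x + h) (by simp)
  calc ‖F (x + h) - F x - fderiv ℝ F x h‖
      = ‖F (x + h) - fderiv ℝ F x (x + h) - (F x - fderiv ℝ F x x)‖ := by
        rw [map_add]; congr 1; abel
    _ ≤ |K| * ‖h‖ * ‖x + h - x‖ := hmv
    _ = |K| * ‖h‖ ^ 2 := by rw [add_sub_cancel_left]; ring

lemma norm_flux_term_le {E : Type*} [NormedAddCommGroup E] [NormedSpace ℝ E] (n : ℕ)
    (m : ContinuousMultilinearMap ℝ (fun _ : Fin (n + 3) => E) ℝ) (R : ℝ) (Δ e : E)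
    (hΔ : ‖Δ‖ ≤ R) :
    ((n + 3).factorial : ℝ)⁻¹ * m (fun i => if (i : ℕ) + 1 = n + 3 then e else Δ)
      ≤ ‖m‖ * R ^ n * ‖Δ‖ ^ 2 * ‖e‖ := by
  have h1 : ‖m (fun i => if (i : ℕ) + 1 = n + 3 then e else Δ)‖
      ≤ ‖m‖ * R ^ n * ‖Δ‖ ^ 2 * ‖e‖ := by
    refine (m.le_opNorm _).trans ?_
    have hlt : ∀ i : Fin (n + 2), (i : ℕ) ≠ n + 2 := fun i => i.2.ne
    rw [Fin.prod_univ_castSucc]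
    simp only [Fin.val_castSucc, Fin.val_last, if_true, Nat.add_right_cancel_iff, hlt, if_false,
      Finset.prod_const, Finset.card_univ, Fintype.card_fin]
    rw [pow_add, mul_assoc ‖m‖, mul_assoc ‖m‖]
    gcongr
  have h2 : ((n + 3).factorial : ℝ)⁻¹ ≤ 1 :=
    inv_le_one_of_one_le₀ (by exact_mod_cast Nat.one_le_iff_ne_zero.2 (Nat.factorial_ne_zero _))
  calc _ ≤ ((n + 3).factorial : ℝ)⁻¹ * ‖m (fun i => if (i : ℕ) + 1 = n + 3 then e else Δ)‖ := by
        gcongr; exact Real.le_norm_self _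
    _ ≤ 1 * ‖m (fun i => if (i : ℕ) + 1 = n + 3 then e else Δ)‖ := by gcongr
    _ ≤ _ := by rwa [one_mul]

/-- Second-order consistency of the Taylor-series flux: for every `x` and radius `R`
there is a constant `C₀ ≥ 0` with `‖g(x,Δ) − ∇f(x + Δ/2)‖ ≤ C₀‖Δ‖²` for `‖Δ‖ ≤ R`. -/
theorem taylorFlux_second_order_consistency (N d : ℕ)
    (f : EuclideanSpace ℝ (Fin N) → ℝ) (hf : ContDiff ℝ (⊤ : ℕ∞) f)
    (hpoly : ∀ κ : ℕ, d < κ → ∀ x : EuclideanSpace ℝ (Fin N), iteratedFDeriv ℝ κ f x = 0)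
    (g : EuclideanSpace ℝ (Fin N) → EuclideanSpace ℝ (Fin N) → EuclideanSpace ℝ (Fin N))
    (hg : ∀ x Δ e : EuclideanSpace ℝ (Fin N), ⟪g x Δ, e⟫ =
      ∑ κ ∈ Finset.Icc 1 d, (κ.factorial : ℝ)⁻¹ *
        (iteratedFDeriv ℝ κ f x) (fun i : Fin κ => if (i : ℕ) + 1 = κ then e else Δ)) :
    ∀ x : EuclideanSpace ℝ (Fin N), ∀ R : ℝ, 0 < R →
      ∃ C₀ : ℝ, 0 ≤ C₀ ∧
        ∀ Δ : EuclideanSpace ℝ (Fin N), ‖Δ‖ ≤ R →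
          ‖g x Δ - gradient f (x + (2 : ℝ)⁻¹ • Δ)‖ ≤ C₀ * ‖Δ‖ ^ 2 := by
  intro x R hR
  have hf' : ContDiff ℝ 2 (fderiv ℝ f) :=
    (contDiff_infty.1 hf 3).fderiv_right (by norm_num)
  obtain ⟨K, hK0, hK⟩ := fderiv_remainder_le hf' x R
  set S : ℝ := ∑ n ∈ Finset.range d, ‖iteratedFDeriv ℝ (n + 3) f x‖ * R ^ n with hS
  have hS0 : 0 ≤ S := Finset.sum_nonneg fun n _ => by positivity
  refine ⟨S + K, by positivity, fun Δ hΔ => ?_⟩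
  -- Terms of order greater than `d` vanish, so the sum may be run up to `d + 2`; this isolates
  -- the orders 1 and 2 for every `d`.
  have hsum : ∀ e, ⟪g x Δ, e⟫ = fderiv ℝ f x e + 2⁻¹ * fderiv ℝ (fderiv ℝ f) x Δ e +
      ∑ n ∈ Finset.range d, ((n + 3).factorial : ℝ)⁻¹ * (iteratedFDeriv ℝ (n + 3) f x)
        (fun i => if (i : ℕ) + 1 = n + 3 then e else Δ) := by
    intro e
    rw [hg, Finset.sum_subset (s₂ := Finset.Ico 1 (d + 2 + 1))
      (fun k hk => by simp only [Finset.mem_Icc, Finset.mem_Ico] at *; omega)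
      (fun k hk hk' => by
        simp only [Finset.mem_Icc, Finset.mem_Ico] at *
        rw [hpoly k (by omega)]; simp),
      ← Finset.sum_Ico_add' _ 0 (d + 2) 1, ← Finset.range_eq_Ico, Finset.sum_range_succ',
      Finset.sum_range_succ']
    simp only [zero_add, iteratedFDeriv_two_apply, iteratedFDeriv_one_apply, add_assoc,
      Nat.reduceAdd]
    simp
    ring
  set h : EuclideanSpace ℝ (Fin N) := (2 : ℝ)⁻¹ • Δ with hh
  have hnorm : ‖h‖ ≤ ‖Δ‖ := by
    rw [hh, norm_smul]
    norm_num
    linarith [norm_nonneg Δ]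
  have htest : ∀ e, ⟪g x Δ - gradient f (x + h), e⟫ ≤ (S + K) * ‖Δ‖ ^ 2 * ‖e‖ := by
    intro e
    have hgrad : ⟪gradient f (x + h), e⟫ = fderiv ℝ f (x + h) e := by
      rw [gradient, InnerProductSpace.toDual_symm_apply]
    have hhigh : ∑ n ∈ Finset.range d, ((n + 3).factorial : ℝ)⁻¹ *
        (iteratedFDeriv ℝ (n + 3) f x) (fun i => if (i : ℕ) + 1 = n + 3 then e else Δ)
        ≤ S * ‖Δ‖ ^ 2 * ‖e‖ := by
      rw [hS, Finset.sum_mul, Finset.sum_mul]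
      exact Finset.sum_le_sum fun n _ => norm_flux_term_le n _ R Δ e hΔ
    have hrem : -((fderiv ℝ f (x + h) - fderiv ℝ f x - fderiv ℝ (fderiv ℝ f) x h) e)
        ≤ K * ‖Δ‖ ^ 2 * ‖e‖ := by
      refine (neg_le_abs _).trans ?_
      rw [← Real.norm_eq_abs]
      refine (ContinuousLinearMap.le_opNorm _ e).trans ?_
      gcongr
      exact (hK h (hnorm.trans hΔ)).trans (by gcongr)
    have hlin : fderiv ℝ (fderiv ℝ f) x h e = 2⁻¹ * fderiv ℝ (fderiv ℝ f) x Δ e := by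
      simp [hh]
    simp only [sub_apply, hlin] at hrem
    rw [inner_sub_left, hsum, hgrad]
    linarith
  have hself := htest (g x Δ - gradient f (x + h))
  rw [real_inner_self_eq_norm_sq, sq] at hself
  rcases (norm_nonneg (g x Δ - gradient f (x + h))).eq_or_lt with h0 | hpos
  · rw [← h0]; positivity
  · exact le_of_mul_le_mul_right hself hpos
end
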